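/- arXiv:2410.03267 — 2 statements merged into one kernel-verified Lean document; each statement's English description precedes it below -/
import Mathlib

section
/- Let X be a nonempty measurable space, P a probability measure on X, ε ∈ [0,1], and f : X → [0,∞] a measurable function. Then the infimum, over all probability measures Π in the ε-contaminated credal set 𝒫_ε(P), of the (Lebesgue) integral ∫ f dΠ equals (1−ε)·∫ f dP + ε·inf_{x ∈ X} f(x). -/
open MeasureTheory ENNReal

/-!
The integral against a mixture is the mixture of the integrals, so only the infimum of `∫ f dR`
over probability measures `R` matters. It is at least `inf f` since `R` has total mass one, and at
most `inf f` because `∫ f d(dirac x) ≤ f x` for every point `x`. Multiplying by a finite weight and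
adding a constant commute with an infimum over a nonempty family, even if values are infinite.
-/

section

variable {X : Type*} [MeasurableSpace X]

theorem lintegral_dirac_le (f : X → ℝ≥0∞) (x : X) : ∫⁻ y, f y ∂Measure.dirac x ≤ f x := by
  -- `∫⁻` is a lower integral: its value is attained by a measurable function below `f`.
  obtain ⟨g, hg, hgf, h_eq⟩ := exists_measurable_le_lintegral_eq (Measure.dirac x) f
  calc ∫⁻ y, f y ∂Measure.dirac x = g x := by rw [h_eq, lintegral_dirac' x hg]
    _ ≤ f x := hgf x

theorem iInf_isProbabilityMeasure_lintegral (f : X → ℝ≥0∞) :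
    ⨅ R : {R : Measure X // IsProbabilityMeasure R}, ∫⁻ x, f x ∂(R : Measure X) = ⨅ x, f x := by
  apply le_antisymm
  · exact le_iInf fun x => iInf_le_of_le ⟨Measure.dirac x, inferInstance⟩ (lintegral_dirac_le f x)
  · exact le_iInf fun ⟨_, _⟩ => iInf_le_lintegral f

theorem epsContamination_lower_expectation_general [Nonempty X]
    (μ : Measure X) (a : ℝ≥0∞) {b : ℝ≥0∞} (hb : b ≠ ∞) (f : X → ℝ≥0∞) :
    ⨅ R : {R : Measure X // IsProbabilityMeasure R}, ∫⁻ x, f x ∂(a • μ + b • (R : Measure X)) =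
      a * ∫⁻ x, f x ∂μ + b * ⨅ x, f x := by
  have : Nonempty {R : Measure X // IsProbabilityMeasure R} :=
    ‹Nonempty X›.map fun x => ⟨Measure.dirac x, inferInstance⟩
  simp only [lintegral_add_measure, lintegral_smul_measure, smul_eq_mul]
  rw [← ENNReal.add_iInf, ← ENNReal.mul_iInf (fun h => absurd h hb),
    iInf_isProbabilityMeasure_lintegral]

end

/-- The lower expectation of a nonnegative measurable function `f` over the
ε-contaminated credal set `{(1-ε) • P + ε • R : R probability}` equals
`(1-ε) * ∫ f dP + ε * inf f`. -/
theorem epsContamination_lower_expectation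
    {X : Type*} [MeasurableSpace X] [Nonempty X]
    (P : Measure X) [IsProbabilityMeasure P]
    (ε : ℝ≥0∞) (hε : ε ≤ 1)
    (f : X → ℝ≥0∞) (hf : Measurable f) :
    ⨅ R : {R : Measure X // IsProbabilityMeasure R},
        ∫⁻ x, f x ∂((1 - ε) • P + ε • (R : Measure X)) =
      (1 - ε) * ∫⁻ x, f x ∂P + ε * ⨅ x, f x :=
  epsContamination_lower_expectation_general P (1 - ε) (ne_top_of_le_ne_top one_ne_top hε) f
end

section
/- Let X and Y be measurable spaces, P a probability measure on X, Q a probability measure on Y, ε ∈ [0,1), and c : X × Y → [0,∞] a measurable cost function. Let T : X → Y be measurable and let π_T denote the pushforward of P under the map x ↦ (x, T(x)). Suppose (1−ε)·π_T belongs to Γ_R = {(1−ε)·G : G ∈ Γ(P,Q)} and minimizes ∫ c dα̲ over Γ_R. Then: (i) T_#((1−ε)·P) = (1−ε)·Q; (ii) T minimizes S ↦ ∫ c(x,S(x)) d((1−ε)·P)(x) over all measurable maps S : X → Y with S_#((1−ε)·P) = (1−ε)·Q; and (iii) the optimal value of the Lower Probability Monge problem equals the optimal value of the Restricted Lower Probability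 Kantorovich problem, i.e. inf over admissible maps S of ∫ c(x,S(x)) d((1−ε)·P)(x) equals inf over Γ_R of ∫ c dα̲. -/
open MeasureTheory ENNReal

/-- The set of couplings of `P` and `Q`: joint measures on `X × Y` whose marginals
are `P` and `Q`. -/
def Couplings {X Y : Type*} [MeasurableSpace X] [MeasurableSpace Y]
    (P : Measure X) (Q : Measure Y) : Set (Measure (X × Y)) :=
  {α | α.map Prod.fst = P ∧ α.map Prod.snd = Q}

/-!
A coupling of `P` and `Q` scaled by `a ∉ {0, ∞}` is the same thing as a coupling of `a • P` and
`a • Q`, so both lower probability problems are the classical ones between scaled marginals. There,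
the admissible maps are exactly the measurable maps whose graph measure is a coupling, with the
same cost; hence a Kantorovich minimizer carried by a graph also attains the Monge infimum.
-/

section Couplings

variable {X Y : Type*} [MeasurableSpace X] [MeasurableSpace Y]

lemma smul_mem_couplings_smul {P : Measure X} {Q : Measure Y} {G : Measure (X × Y)}
    (hG : G ∈ Couplings P Q) (a : ℝ≥0∞) : a • G ∈ Couplings (a • P) (a • Q) :=
  ⟨by rw [Measure.map_smul, hG.1], by rw [Measure.map_smul, hG.2]⟩

lemma image_smul_couplings {P : Measure X} {Q : Measure Y} {a : ℝ≥0∞} (ha₀ : a ≠ 0)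
    (ha : a ≠ ∞) :
    (fun G : Measure (X × Y) => a • G) '' Couplings P Q = Couplings (a • P) (a • Q) := by
  refine Set.Subset.antisymm (Set.image_subset_iff.mpr fun G hG => smul_mem_couplings_smul hG a)
    fun α hα => ⟨a⁻¹ • α, ?_, ?_⟩
  · simpa only [smul_smul, ENNReal.inv_mul_cancel ha₀ ha, one_smul] using
      smul_mem_couplings_smul hα a⁻¹
  · simp only [smul_smul, ENNReal.mul_inv_cancel ha₀ ha, one_smul]

lemma map_graph_mem_couplings_iff {μ : Measure X} {ν : Measure Y} {S : X → Y}
    (hS : Measurable S) : μ.map (fun x => (x, S x)) ∈ Couplings μ ν ↔ μ.map S = ν := by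
  have h_fst : (μ.map fun x => (x, S x)).map Prod.fst = μ :=
    (Measure.fst_map_prodMk hS).trans Measure.map_id
  have h_snd : (μ.map fun x => (x, S x)).map Prod.snd = μ.map S :=
    Measure.snd_map_prodMk measurable_id
  simp only [Couplings, Set.mem_ofPred_eq, h_fst, h_snd, true_and]

lemma lintegral_map_graph (μ : Measure X) {c : X × Y → ℝ≥0∞} (hc : Measurable c) {S : X → Y}
    (hS : Measurable S) :
    ∫⁻ z, c z ∂(μ.map fun x => (x, S x)) = ∫⁻ x, c (x, S x) ∂μ :=
  lintegral_map hc (measurable_id.prodMk hS)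

theorem rlpKantorovich_equiv_lpMonge_general {μ : Measure X} {ν : Measure Y}
    {c : X × Y → ℝ≥0∞} (hc : Measurable c) {T : X → Y} (hT : Measurable T)
    (hmem : μ.map (fun x => (x, T x)) ∈ Couplings μ ν)
    (hmin : ∀ β ∈ Couplings μ ν, ∫⁻ z, c z ∂(μ.map fun x => (x, T x)) ≤ ∫⁻ z, c z ∂β) :
    μ.map T = ν ∧
    (∀ S : X → Y, Measurable S → μ.map S = ν → ∫⁻ x, c (x, T x) ∂μ ≤ ∫⁻ x, c (x, S x) ∂μ) ∧
    (⨅ S : {S : X → Y // Measurable S ∧ μ.map S = ν}, ∫⁻ x, c (x, (S : X → Y) x) ∂μ =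
      ⨅ α : Couplings μ ν, ∫⁻ z, c z ∂(α : Measure (X × Y))) := by
  have hpush : μ.map T = ν := (map_graph_mem_couplings_iff hT).mp hmem
  have hopt (S : X → Y) (hS : Measurable S) (hSν : μ.map S = ν) :
      ∫⁻ x, c (x, T x) ∂μ ≤ ∫⁻ x, c (x, S x) ∂μ := by
    rw [← lintegral_map_graph μ hc hT, ← lintegral_map_graph μ hc hS]
    exact hmin _ ((map_graph_mem_couplings_iff hS).mpr hSν)
  refine ⟨hpush, hopt, ?_⟩
  calc ⨅ S : {S : X → Y // Measurable S ∧ μ.map S = ν}, ∫⁻ x, c (x, (S : X → Y) x) ∂μ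
    _ = ∫⁻ x, c (x, T x) ∂μ :=
      IsMinOn.iInf_eq (s := {S : X → Y | Measurable S ∧ μ.map S = ν})
        (f := fun S : X → Y => ∫⁻ x, c (x, S x) ∂μ) ⟨hT, hpush⟩
        (isMinOn_iff.mpr fun S hS => hopt S hS.1 hS.2)
    _ = ∫⁻ z, c z ∂(μ.map fun x => (x, T x)) := (lintegral_map_graph μ hc hT).symm
    _ = ⨅ α : Couplings μ ν, ∫⁻ z, c z ∂(α : Measure (X × Y)) :=
      (IsMinOn.iInf_eq (f := fun α => ∫⁻ z, c z ∂α) hmem (isMinOn_iff.mpr hmin)).symm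

end Couplings

/-- Theorem 3 of the paper: if the plan `(1-ε) • π_T` induced by a measurable map `T`
(where `π_T` is the pushforward of `P` under `x ↦ (x, T x)`) belongs to
`Γ_R = {(1-ε) • G : G ∈ Γ(P,Q)}` and minimizes the cost over `Γ_R`, then
(i) `T` pushes `(1-ε) • P` to `(1-ε) • Q`;
(ii) `T` minimizes the Lower Probability Monge cost among admissible maps; and
(iii) the optimal values of the Lower Probability Monge problem and the Restricted Lower
Probability Kantorovich problem coincide. -/
theorem rlpKantorovich_equiv_lpMonge
    {X Y : Type*} [MeasurableSpace X] [MeasurableSpace Y]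
    (P : Measure X) [IsProbabilityMeasure P] (Q : Measure Y) [IsProbabilityMeasure Q]
    (ε : ℝ≥0∞) (hε : ε < 1)
    (c : X × Y → ℝ≥0∞) (hc : Measurable c)
    (T : X → Y) (hT : Measurable T)
    (hmem : (1 - ε) • Measure.map (fun x => (x, T x)) P ∈
      (fun G : Measure (X × Y) => (1 - ε) • G) '' Couplings P Q)
    (hmin : ∀ β ∈ (fun G : Measure (X × Y) => (1 - ε) • G) '' Couplings P Q,
      ∫⁻ z, c z ∂((1 - ε) • Measure.map (fun x => (x, T x)) P) ≤ ∫⁻ z, c z ∂β) :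
    Measure.map T ((1 - ε) • P) = (1 - ε) • Q ∧
    (∀ S : X → Y, Measurable S → Measure.map S ((1 - ε) • P) = (1 - ε) • Q →
      ∫⁻ x, c (x, T x) ∂((1 - ε) • P) ≤ ∫⁻ x, c (x, S x) ∂((1 - ε) • P)) ∧
    (⨅ S : {S : X → Y // Measurable S ∧ Measure.map S ((1 - ε) • P) = (1 - ε) • Q},
        ∫⁻ x, c (x, (S : X → Y) x) ∂((1 - ε) • P) =
      ⨅ α : ((fun G : Measure (X × Y) => (1 - ε) • G) '' Couplings P Q),
        ∫⁻ z, c z ∂(α : Measure (X × Y))) := by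
  rw [image_smul_couplings (tsub_pos_of_lt hε).ne' (sub_ne_top one_ne_top)] at hmem hmin ⊢
  rw [← Measure.map_smul] at hmem hmin
  exact rlpKantorovich_equiv_lpMonge_general hc hT hmem hmin
end
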